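/- Generalized Poisson summation formula on a dense ℤ-module: under the dense cut-and-project hypotheses with f : ℝ^m → ℂ continuous and |x|^{m+1+α}|f(x)| ≤ C, the distributional Fourier transform identity (∑_{z ∈ L} η(z) δ_z)^ = ∑_{k ∈ L*} |c(k)|² δ_k holds, where η(z) = (1/|det L̃|) ∫_{ℝ^m} f(u) conj(f(u−z*)) du and c(k) = (1/|det L̃|) f̂(−k*) for k ∈ L*. -/

import Mathlib

open MeasureTheory Metric
open scoped RealInnerProductSpace

/-- The projection of the lattice to direct space. -/
def physL (d m : ℕ) (L : Submodule ℤ (EuclideanSpace ℝ (Fin d) × EuclideanSpace ℝ (Fin m))) :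
    Set (EuclideanSpace ℝ (Fin d)) :=
  Prod.fst '' (L : Set (EuclideanSpace ℝ (Fin d) × EuclideanSpace ℝ (Fin m)))

/-- The dual lattice of L̃ in ℝ^d × ℝ^m, w.r.t. the Euclidean pairing of the product. -/
def dualL (d m : ℕ) (L : Submodule ℤ (EuclideanSpace ℝ (Fin d) × EuclideanSpace ℝ (Fin m))) :
    Set (EuclideanSpace ℝ (Fin d) × EuclideanSpace ℝ (Fin m)) :=
  {y | ∀ x ∈ L, ∃ n : ℤ, ⟪y.1, x.1⟫ + ⟪y.2, x.2⟫ = (n : ℝ)}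

/-- The autocorrelation coefficient η(z). -/
noncomputable def etaLim (d m : ℕ)
    (L : Submodule ℤ (EuclideanSpace ℝ (Fin d) × EuclideanSpace ℝ (Fin m)))
    (star : EuclideanSpace ℝ (Fin d) → EuclideanSpace ℝ (Fin m))
    (f : EuclideanSpace ℝ (Fin m) → ℂ) (z : EuclideanSpace ℝ (Fin d)) : ℂ :=
  (ZLattice.covolume L volume)⁻¹ • ∫ u, f u * (starRingEnd ℂ) (f (u - star z))

/-- The diffraction intensity |c(k)|² = (1/|det L̃|²)|f̂(−k*)|² at k ∈ L*. -/
noncomputable def intensity (d m : ℕ)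
    (L : Submodule ℤ (EuclideanSpace ℝ (Fin d) × EuclideanSpace ℝ (Fin m)))
    (starD : EuclideanSpace ℝ (Fin d) → EuclideanSpace ℝ (Fin m))
    (f : EuclideanSpace ℝ (Fin m) → ℂ) (k : EuclideanSpace ℝ (Fin d)) : ℝ :=
  ((ZLattice.covolume L volume)⁻¹) ^ 2 *
    ‖∫ u, Complex.exp (2 * Real.pi * Complex.I * ((⟪starD k, u⟫ : ℝ) : ℂ)) * f u‖ ^ 2

/-!
Suppose `φ = 𝓕 ψ * h`. Apply the polarized Parseval identity on the torus `(E × F) / L` to the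
periodizations along `L` of `conj ψ ⊗ f` and `𝓕 h ⊗ f`. Unfolding the inner product of the
periodizations gives the sum over `L`, since `∫ ψ (x - z) * 𝓕 h x = 𝓕 φ z`; unfolding their Fourier
coefficients gives the sum over the dual lattice, with the factors `𝓕 ψ * h = φ` and `‖𝓕⁻ f‖ ^ 2`.
Since Parseval concerns `L²`, only locally uniform convergence of the two periodizations is needed,
not decay of `𝓕 f`. Finally, every Schwartz function `φ` factors in this way with `h` Schwartz if
`ψ` is a product of kernels `exp (-|x|)`, because `1 / 𝓕 ψ` is then a polynomial.
-/

open Module Topology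
open scoped ComplexConjugate FourierTransform

section Torus

variable {ι V : Type*} [NormedAddCommGroup V] [NormedSpace ℝ V] (b : Basis ι ℝ V)

/-- The quotient map from `V` onto its torus modulo the lattice spanned by the basis `b`, in the
coordinates of `b`. -/
noncomputable def toTorus (v : V) : UnitAddTorus ι := fun i => (b.repr v i : UnitAddCircle)

lemma sub_mem_span_of_toTorus_eq {v w : V} (h : toTorus b v = toTorus b w) :
    v - w ∈ Submodule.span ℤ (Set.range b) := by
  refine (b.mem_span_iff_repr_mem ℤ _).2 fun i => ?_
  have hi : ((b.repr v i - b.repr w i : ℝ) : UnitAddCircle) = 0 := by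
    rw [AddCircle.coe_sub, sub_eq_zero]
    exact congrFun h i
  obtain ⟨n, hn⟩ := (AddCircle.coe_eq_zero_iff (1 : ℝ)).1 hi
  exact ⟨n, by simpa using hn⟩

section Finite

variable [Finite ι]

lemma isOpenQuotientMap_toTorus : IsOpenQuotientMap (toTorus b) :=
  (IsOpenQuotientMap.piMap (f := fun (_ : ι) (x : ℝ) => (x : UnitAddCircle))
    fun _ => QuotientAddGroup.isOpenQuotientMap_mk).comp
    b.equivFunL.toHomeomorph.isOpenQuotientMap

lemma exists_comp_toTorus_eq {X : Type*} [TopologicalSpace X] (u : C(V, X))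
    (hu : ∀ v, ∀ x ∈ Submodule.span ℤ (Set.range b), u (v + x) = u v) :
    ∃ U : C(UnitAddTorus ι, X), ∀ v, U (toTorus b v) = u v := by
  have hq := (isOpenQuotientMap_toTorus b).isQuotientMap
  let T : C(V, UnitAddTorus ι) := ⟨toTorus b, hq.continuous⟩
  have hfac : Function.FactorsThrough u T := fun v w hvw => by
    simpa using hu w (v - w) (sub_mem_span_of_toTorus_eq b hvw)
  exact ⟨Topology.IsQuotientMap.lift (f := T) hq u hfac, fun v =>
    congrFun (congrArg DFunLike.coe (Topology.IsQuotientMap.lift_comp (f := T) hq u hfac)) v⟩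

lemma preimage_fundamentalDomain_equivFunL_symm :
    b.equivFunL.symm ⁻¹' ZSpan.fundamentalDomain b = Set.univ.pi fun _ => Set.Ico (0 : ℝ) 1 := by
  ext t
  have hrepr (i : ι) : b.repr (b.equivFunL.symm t) i = t i :=
    congrFun (b.equivFunL.apply_symm_apply t) i
  simp only [Set.mem_preimage, ZSpan.mem_fundamentalDomain, hrepr, Set.mem_univ_pi]

end Finite

section Fintype

variable [Fintype ι]

lemma mFourier_toTorus (n : ι → ℤ) (v : V) :
    UnitAddTorus.mFourier n (toTorus b v) = 𝐞 (∑ i, n i * b.repr v i) := by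
  simp only [UnitAddTorus.mFourier, toTorus, ContinuousMap.coe_mk, fourier_coe_apply,
    Real.fourierChar_apply, ← Complex.exp_sum]
  congr 1
  push_cast
  rw [Finset.mul_sum, Finset.sum_mul]
  exact Finset.sum_congr rfl fun i _ => by ring

lemma exists_equiv_dualSubmodule_span {B : LinearMap.BilinForm ℝ V} (hB : B.Nondegenerate) :
    ∃ e : (ι → ℤ) ≃ B.dualSubmodule (Submodule.span ℤ (Set.range b)),
      ∀ n v, B (e n) v = ∑ i, n i * b.repr v i := by
  classical
  have hdual (i : ι) (v : V) : B (B.dualBasis hB b i) v = b.repr v i := by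
    conv_lhs => rw [← b.sum_repr v, map_sum]
    simp [LinearMap.BilinForm.apply_dualBasis_left]
  let b' := (B.dualBasis hB b).restrictScalars ℤ
  refine ⟨b'.equivFun.symm.toEquiv.trans
    (LinearEquiv.ofEq _ _ (B.dualSubmodule_span_of_basis hB b).symm).toEquiv, fun n v => ?_⟩
  simp [b', Basis.equivFun_symm_apply, hdual]

variable [MeasurableSpace V] [BorelSpace V] (μ : Measure V) [μ.IsAddHaarMeasure]

lemma eq_measure_fundamentalDomain_smul_map_volume :
    μ = μ (ZSpan.fundamentalDomain b) • Measure.map b.equivFunL.symm volume := by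
  have : FiniteDimensional ℝ V := b.finiteDimensional_of_finite
  set ν : Measure V := Measure.map b.equivFunL.symm volume with hν
  have : ν.IsAddHaarMeasure := b.equivFunL.symm.isAddHaarMeasure_map volume
  have hνD : ν (ZSpan.fundamentalDomain b) = 1 := by
    rw [hν, Measure.map_apply b.equivFunL.symm.continuous.measurable
      (ZSpan.fundamentalDomain_measurableSet b), preimage_fundamentalDomain_equivFunL_symm,
      volume_pi_pi]
    simp
  have hμ := Measure.isAddLeftInvariant_eq_smul μ ν
  have hD := congrArg (fun m : Measure V => m (ZSpan.fundamentalDomain b)) hμ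
  simp only [Measure.smul_apply, hνD] at hD
  rw [hD]
  simpa only [ENNReal.smul_def, smul_eq_mul, mul_one] using hμ

lemma setAverage_fundamentalDomain_comp_toTorus {E : Type*} [NormedAddCommGroup E] [NormedSpace ℝ E]
    (F : UnitAddTorus ι → E) :
    ⨍ v in ZSpan.fundamentalDomain b, F (toTorus b v) ∂μ =
      ∫ t in {t : ι → ℝ | ∀ i, t i ∈ Set.Ioc 0 (0 + 1)}, F (fun i => (t i : UnitAddCircle)) := by
  have hcube : (Set.univ.pi fun _ : ι => Set.Ico (0 : ℝ) 1) =ᵐ[volume]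
      {t : ι → ℝ | ∀ i, t i ∈ Set.Ioc 0 (0 + 1)} := by
    simpa [Set.pi, volume_pi] using (Measure.univ_pi_Ico_ae_eq_Icc (μ := fun _ : ι => volume)
      (f := (0 : ι → ℝ)) (g := 1)).trans Measure.univ_pi_Ioc_ae_eq_Icc.symm
  have htorus (t : ι → ℝ) : toTorus b (b.equivFunL.symm t) = fun i => (t i : UnitAddCircle) :=
    funext fun i => congrArg _ (congrFun (b.equivFunL.apply_symm_apply t) i)
  have hemb : MeasurableEmbedding b.equivFunL.symm :=
    b.equivFunL.symm.toHomeomorph.measurableEmbedding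
  have : FiniteDimensional ℝ V := b.finiteDimensional_of_finite
  have hD : μ.real (ZSpan.fundamentalDomain b) ≠ 0 :=
    ENNReal.toReal_ne_zero.2 ⟨ZSpan.measure_fundamentalDomain_ne_zero b,
      (ZSpan.fundamentalDomain_isBounded b).measure_lt_top.ne⟩
  rw [setAverage_eq, inv_smul_eq_iff₀ hD]
  conv_lhs => rw [eq_measure_fundamentalDomain_smul_map_volume b μ]
  rw [Measure.restrict_smul, integral_smul_measure, hemb.setIntegral_map,
    preimage_fundamentalDomain_equivFunL_symm, setIntegral_congr_set hcube]
  simp only [htorus, Measure.real]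

lemma hasSum_conj_mFourierCoeff_mul (U W : C(UnitAddTorus ι, ℂ)) :
    HasSum (fun n => conj (UnitAddTorus.mFourierCoeff U n) * UnitAddTorus.mFourierCoeff W n)
      (∫ t in {t : ι → ℝ | ∀ i, t i ∈ Set.Ioc 0 (0 + 1)},
        conj (U fun i => (t i : UnitAddCircle)) * W fun i => (t i : UnitAddCircle)) := by
  simp_rw [← UnitAddTorus.mFourierCoeff_toLp]
  convert UnitAddTorus.hasSum_prod_mFourierCoeff _ _ using 1
  refine (UnitAddTorus.integral_preimage (fun t => conj (U t) * W t) 0).symm.trans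
    (integral_congr_ae ?_)
  exact ((U.coeFn_toAEEqFun _).symm.fun_comp conj).mul (W.coeFn_toAEEqFun _).symm

end Fintype

variable {b}

lemma hasSum_conj_setAverage_mul_setAverage [Finite ι] [MeasurableSpace V] [BorelSpace V]
    (μ : Measure V) [μ.IsAddHaarMeasure] {B : LinearMap.BilinForm ℝ V} (hB : B.Nondegenerate)
    {u w : C(V, ℂ)} (hu : ∀ v, ∀ x ∈ Submodule.span ℤ (Set.range b), u (v + x) = u v)
    (hw : ∀ v, ∀ x ∈ Submodule.span ℤ (Set.range b), w (v + x) = w v) :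
    HasSum (fun q : B.dualSubmodule (Submodule.span ℤ (Set.range b)) =>
        conj (⨍ v in ZSpan.fundamentalDomain b, 𝐞 (-B q v) • u v ∂μ) *
          ⨍ v in ZSpan.fundamentalDomain b, 𝐞 (-B q v) • w v ∂μ)
      (⨍ v in ZSpan.fundamentalDomain b, conj (u v) * w v ∂μ) := by
  cases nonempty_fintype ι
  obtain ⟨e, he⟩ := exists_equiv_dualSubmodule_span b hB
  obtain ⟨U, hU⟩ := exists_comp_toTorus_eq b u hu
  obtain ⟨W, hW⟩ := exists_comp_toTorus_eq b w hw
  have hcoeff {u : C(V, ℂ)} {U : C(UnitAddTorus ι, ℂ)} (hU : ∀ v, U (toTorus b v) = u v)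
      (n : ι → ℤ) : ⨍ v in ZSpan.fundamentalDomain b, 𝐞 (-B (e n) v) • u v ∂μ =
        UnitAddTorus.mFourierCoeff U n := by
    refine Eq.trans ?_ ((setAverage_fundamentalDomain_comp_toTorus b μ fun t =>
      UnitAddTorus.mFourier (-n) t • U t).trans
        (UnitAddTorus.mFourierCoeff_eq_integral U n 0).symm)
    simp only [hU, mFourier_toTorus, he, Circle.smul_def, Pi.neg_apply, Int.cast_neg, neg_mul,
      Finset.sum_neg_distrib]
  rw [← e.hasSum_iff]
  have havg := setAverage_fundamentalDomain_comp_toTorus b μ fun t => conj (U t) * W t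
  simp only [hU, hW] at havg
  simpa only [havg, Function.comp_def, hcoeff hU, hcoeff hW] using
    hasSum_conj_mFourierCoeff_mul U W

end Torus

section Periodization

open TopologicalSpace

variable {V : Type*} [NormedAddCommGroup V] {L : Submodule ℤ V}

/-- The translates of `g` by the elements of `L` are normally summable on every compact set, so
that the periodization of `g` along `L` converges locally uniformly. -/
def SummableTranslates {E : Type*} [NormedAddCommGroup E] (L : Submodule ℤ V) (g : C(V, E)) :
    Prop :=
  ∀ K : Compacts V, Summable fun x : L => ‖(g.comp (.addRight (x : V))).restrict K‖

/-- The sum of all translates of `g` by the elements of `L`, with the junk value `0` if this series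
does not converge locally uniformly. -/
noncomputable def periodization {E : Type*} [NormedAddCommGroup E] (L : Submodule ℤ V)
    (g : C(V, E)) : C(V, E) :=
  ∑' x : L, g.comp (.addRight (x : V))

section NormedGroup

variable {E : Type*} [NormedAddCommGroup E] {g : C(V, E)}

lemma SummableTranslates.of_norm_le {F : Type*} [NormedAddCommGroup F] {h : C(V, F)}
    (hh : SummableTranslates L h)
    (hgh : ∀ K : Compacts V, ∃ C, ∀ v ∈ K, ∀ x ∈ L, ‖g (v + x)‖ ≤ C * ‖h (v + x)‖) :
    SummableTranslates L g := fun K => by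
  obtain ⟨C, hC⟩ := hgh K
  refine ((hh K).mul_left |C|).of_nonneg_of_le (fun _ => norm_nonneg _) fun x => ?_
  refine (ContinuousMap.norm_le _ (by positivity)).2 fun v => (hC v v.2 x x.2).trans ?_
  exact mul_le_mul (le_abs_self C)
    (((h.comp (.addRight (x : V))).restrict K).norm_coe_le_norm v) (norm_nonneg _) (abs_nonneg C)

lemma SummableTranslates.norm (hg : SummableTranslates L g) :
    SummableTranslates L (⟨fun v => ‖g v‖, by fun_prop⟩ : C(V, ℝ)) :=
  hg.of_norm_le fun _ => ⟨1, fun v _ x _ => by simp⟩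

variable [ProperSpace V]

lemma SummableTranslates.hasSum [CompleteSpace E] (hg : SummableTranslates L g) (v : V) :
    HasSum (fun x : L => g (v + x)) (periodization L g v) :=
  ContinuousMap.hasSum_apply (ContinuousMap.summable_of_locally_summable_norm hg).hasSum v

lemma SummableTranslates.periodization_add_mem [CompleteSpace E] (hg : SummableTranslates L g)
    (v : V) {x : V} (hx : x ∈ L) : periodization L g (v + x) = periodization L g v := by
  refine (hg.hasSum (v + x)).unique ?_
  refine (((Equiv.addLeft (⟨x, hx⟩ : L)).hasSum_iff).2 (hg.hasSum v)).congr_fun fun y => ?_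
  simp [add_assoc]

variable [MeasurableSpace V] [BorelSpace V] {μ : Measure V} [μ.IsAddHaarMeasure] [Countable L]
  {D : Set V}

lemma SummableTranslates.integrable (hg : SummableTranslates L g)
    (hD : IsAddFundamentalDomain L D μ) (hDb : Bornology.IsBounded D) : Integrable g μ := by
  have : MeasurableVAdd L V := inferInstanceAs (MeasurableVAdd L.toAddSubgroup V)
  have : VAddInvariantMeasure L V μ := inferInstanceAs (VAddInvariantMeasure L.toAddSubgroup V μ)
  let K : Compacts V := ⟨closure D, hDb.isCompact_closure⟩
  have hle (x : L) : ∫⁻ v in D, ‖g (x +ᵥ v)‖ₑ ∂μ ≤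
      ENNReal.ofReal ‖(g.comp (.addRight (x : V))).restrict K‖ * μ D := by
    rw [← setLIntegral_const]
    refine lintegral_mono_ae
      ((ae_restrict_iff'₀ hD.nullMeasurableSet).2 (.of_forall fun v hv => ?_))
    rw [← ofReal_norm]
    refine ENNReal.ofReal_le_ofReal ?_
    rw [Submodule.vadd_def, vadd_eq_add, add_comm]
    exact ((g.comp (.addRight (x : V))).restrict K).norm_coe_le_norm ⟨v, subset_closure hv⟩
  refine ⟨g.continuous.aestronglyMeasurable, ?_⟩
  rw [HasFiniteIntegral, hD.lintegral_eq_tsum'']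
  refine (ENNReal.tsum_le_tsum hle).trans_lt ?_
  rw [ENNReal.tsum_mul_right]
  exact ENNReal.mul_lt_top (hg K).tsum_ofReal_lt_top hDb.measure_lt_top

lemma SummableTranslates.setIntegral_periodization [CompleteSpace E] [NormedSpace ℝ E]
    (hg : SummableTranslates L g) (hD : IsAddFundamentalDomain L D μ)
    (hDb : Bornology.IsBounded D) : ∫ v in D, periodization L g v ∂μ = ∫ v, g v ∂μ := by
  have : MeasurableVAdd L V := inferInstanceAs (MeasurableVAdd L.toAddSubgroup V)
  have : VAddInvariantMeasure L V μ := inferInstanceAs (VAddInvariantMeasure L.toAddSubgroup V μ)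
  have hint := hg.integrable hD hDb
  have hsum (v : V) : periodization L g v = ∑' x : L, g (x +ᵥ v) := by
    simp only [Submodule.vadd_def, vadd_eq_add, add_comm _ v, (hg.hasSum v).tsum_eq]
  simp only [hsum]
  rw [integral_tsum, hD.integral_eq_tsum'' g hint]
  · exact fun x => (g.continuous.comp (continuous_const_vadd x)).aestronglyMeasurable
  · rw [← hD.lintegral_eq_tsum'' fun v => ‖g v‖ₑ]
    exact hint.2.ne

end NormedGroup

section NormedRing

variable {R : Type*} [NormedRing R] {c g : C(V, R)}

lemma SummableTranslates.mul_periodic (hg : SummableTranslates L g)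
    (hc : ∀ v, ∀ x ∈ L, c (v + x) = c v) : SummableTranslates L (c * g) :=
  hg.of_norm_le fun K => ⟨‖c.restrict K‖, fun v hv x hx => (norm_mul_le _ _).trans <|
    mul_le_mul_of_nonneg_right (by
      rw [hc v x hx]
      exact (c.restrict K).norm_coe_le_norm ⟨v, hv⟩) (norm_nonneg _)⟩

variable [ProperSpace V] [CompleteSpace R]

lemma SummableTranslates.periodization_mul (hg : SummableTranslates L g)
    (hc : ∀ v, ∀ x ∈ L, c (v + x) = c v) :
    periodization L (c * g) = c * periodization L g := by
  ext v
  refine ((hg.mul_periodic hc).hasSum v).unique ?_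
  simpa only [ContinuousMap.mul_apply, hc v _ (Subtype.coe_prop _)] using
    (hg.hasSum v).mul_left (c v)

variable [NormedSpace ℝ R] [MeasurableSpace V] [BorelSpace V] {μ : Measure V} [μ.IsAddHaarMeasure]
  [Countable L] {D : Set V}

lemma SummableTranslates.setIntegral_mul_periodization (hg : SummableTranslates L g)
    (hc : ∀ v, ∀ x ∈ L, c (v + x) = c v) (hD : IsAddFundamentalDomain L D μ)
    (hDb : Bornology.IsBounded D) :
    ∫ v in D, c v * periodization L g v ∂μ = ∫ v, c v * g v ∂μ := by
  refine Eq.trans ?_ ((hg.mul_periodic hc).setIntegral_periodization hD hDb)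
  rw [hg.periodization_mul hc]
  rfl

end NormedRing

section Correlation

variable [ProperSpace V] [MeasurableSpace V] [BorelSpace V] {μ : Measure V} [μ.IsAddHaarMeasure]
  [Countable L] {D : Set V} {𝕜 : Type*} [RCLike 𝕜] {g h : C(V, 𝕜)}

lemma SummableTranslates.hasSum_integral_conj_mul (hg : SummableTranslates L g)
    (hh : SummableTranslates L h) (hD : IsAddFundamentalDomain L D μ)
    (hDb : Bornology.IsBounded D) :
    HasSum (fun x : L => ∫ v, conj (g (v + x)) * h v ∂μ)
      (∫ v in D, conj (periodization L g v) * periodization L h v ∂μ) := by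
  have hper : ∀ v, ∀ x ∈ L, star (periodization L g) (v + x) = star (periodization L g) v :=
    fun v x hx => congrArg star (hg.periodization_add_mem v hx)
  have hbound : Integrable (fun v => periodization L ⟨fun v => ‖g v‖, by fun_prop⟩ v * ‖h v‖) μ :=
    (hh.norm.mul_periodic fun v x hx => hg.norm.periodization_add_mem v hx).integrable hD hDb
  rw [show ∫ v in D, conj (periodization L g v) * periodization L h v ∂μ =
    ∫ v, conj (periodization L g v) * h v ∂μ from hh.setIntegral_mul_periodization hper hD hDb]
  refine hasSum_integral_of_dominated_convergence (fun (x : L) v => ‖g (v + x)‖ * ‖h v‖)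
    (fun x => ((RCLike.continuous_conj.comp (by fun_prop : Continuous fun v => g (v + x))).mul
      h.continuous).aestronglyMeasurable)
    (fun x => .of_forall fun v => by simp)
    (.of_forall fun v => (hg.norm.hasSum v).summable.mul_right _) ?_
    (.of_forall fun v => ((RCLike.hasSum_conj' 𝕜).2 (hg.hasSum v)).mul_right _)
  simpa only [tsum_mul_right, ← (hg.norm.hasSum _).tsum_eq, ContinuousMap.coe_mk] using hbound

end Correlation

end Periodization

section Lattice

lemma fourierChar_neg_apply_add_of_mem_dualSubmodule {V : Type*} [AddCommGroup V] [Module ℝ V]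
    {L : Submodule ℤ V} {B : LinearMap.BilinForm ℝ V} {q x : V}
    (hq : q ∈ B.dualSubmodule L) (hx : x ∈ L) (v : V) : 𝐞 (-B q (v + x)) = 𝐞 (-B q v) := by
  obtain ⟨n, hn⟩ := Submodule.mem_one.1 (hq x hx)
  ext
  rw [map_add, ← hn, eq_intCast, Real.fourierChar_apply, Real.fourierChar_apply]
  exact Complex.exp_eq_exp_iff_exists_int.2 ⟨-n, by push_cast; ring⟩

variable {V : Type*} [NormedAddCommGroup V] [NormedSpace ℝ V] [FiniteDimensional ℝ V]
  [MeasurableSpace V] [BorelSpace V] (μ : Measure V)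
  {L : Submodule ℤ V} [DiscreteTopology L] [IsZLattice ℝ L]

lemma exists_basis_span_eq_isAddFundamentalDomain : ∃ (n : ℕ) (b : Basis (Fin n) ℝ V),
    Submodule.span ℤ (Set.range b) = L ∧ IsAddFundamentalDomain L (ZSpan.fundamentalDomain b) μ :=
  ⟨_, (finBasis ℤ L).ofZLatticeBasis ℝ L, (finBasis ℤ L).ofZLatticeBasis_span ℝ L,
    ZLattice.isAddFundamentalDomain _ μ⟩

variable [μ.IsAddHaarMeasure]

theorem exists_hasSum_lattice_hasSum_dualLattice {B : LinearMap.BilinForm ℝ V}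
    (hB : B.Nondegenerate) {g h : C(V, ℂ)} (hg : SummableTranslates L g)
    (hh : SummableTranslates L h) :
    ∃ S, HasSum (fun x : L => (ZLattice.covolume L μ)⁻¹ • ∫ v, conj (g (v + x)) * h v ∂μ) S ∧
      HasSum (fun q : B.dualSubmodule L => (ZLattice.covolume L μ)⁻¹ ^ 2 •
        (conj (∫ v, 𝐞 (-B q v) • g v ∂μ) * ∫ v, 𝐞 (-B q v) • h v ∂μ)) S := by
  obtain ⟨n, b, rfl, hD⟩ := exists_basis_span_eq_isAddFundamentalDomain (L := L) μ
  set L := Submodule.span ℤ (Set.range b)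
  have hDb := ZSpan.fundamentalDomain_isBounded b
  rw [ZLattice.covolume_eq_measure_fundamentalDomain L μ hD]
  have hcoeff {g : C(V, ℂ)} (hg : SummableTranslates L g) (q : B.dualSubmodule L) :
      ⨍ v in ZSpan.fundamentalDomain b, 𝐞 (-B q v) • periodization L g v ∂μ =
        (μ.real (ZSpan.fundamentalDomain b))⁻¹ • ∫ v, 𝐞 (-B q v) • g v ∂μ := by
    have hcont : Continuous fun v => (𝐞 (-B q v) : ℂ) :=
      continuous_subtype_val.comp
        (Real.continuous_fourierChar.comp (B q).continuous_of_finiteDimensional.neg)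
    rw [setAverage_eq]
    exact congrArg _ (hg.setIntegral_mul_periodization (c := ⟨_, hcont⟩) (fun v x hx =>
      congrArg ((↑) : Circle → ℂ) (fourierChar_neg_apply_add_of_mem_dualSubmodule q.2 hx v)) hD hDb)
  refine ⟨⨍ v in ZSpan.fundamentalDomain b, conj (periodization L g v) * periodization L h v ∂μ,
    ?_, ?_⟩
  · rw [setAverage_eq]
    exact (hg.hasSum_integral_conj_mul hh hD hDb).const_smul _
  · refine (hasSum_conj_setAverage_mul_setAverage μ hB (fun v x => hg.periodization_add_mem v)
      fun v x => hh.periodization_add_mem v).congr_fun fun q => ?_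
    rw [hcoeff hg, hcoeff hh, RCLike.conj_smul, smul_mul_smul_comm, sq]

end Lattice

section Decay

open Filter Asymptotics
open scoped Pointwise

/-- Translation changes the weight `w` by at most a locally bounded factor, so the sum of `w` over
the lattice is controlled by its integral. -/
lemma SummableTranslates.of_norm_le_moderate {V E : Type*} [NormedAddCommGroup V] [NormedSpace ℝ V]
    [FiniteDimensional ℝ V] [MeasurableSpace V] [BorelSpace V] {μ : Measure V} [μ.IsAddHaarMeasure]
    {L : Submodule ℤ V} [DiscreteTopology L] [IsZLattice ℝ L] [NormedAddCommGroup E] {g : C(V, E)}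
    {w m : V → ℝ} (hgw : ∀ v, ‖g v‖ ≤ w v) (hw : Integrable w μ) (hm : Continuous m)
    (hwm : ∀ v x, w x ≤ m v * w (v + x)) : SummableTranslates L g := fun K => by
  obtain ⟨n, b, -, hD⟩ := exists_basis_span_eq_isAddFundamentalDomain (L := L) μ
  have hDb := ZSpan.fundamentalDomain_isBounded b
  have hDm := ZSpan.fundamentalDomain_measurableSet b
  set D := ZSpan.fundamentalDomain b
  have : MeasurableVAdd L V := inferInstanceAs (MeasurableVAdd L.toAddSubgroup V)
  have : VAddInvariantMeasure L V μ := inferInstanceAs (VAddInvariantMeasure L.toAddSubgroup V μ)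
  obtain ⟨C, hC⟩ := (hDb.isCompact_closure.prod K.isCompact).exists_bound_of_continuousOn
    (f := fun p : V × V => m (p.1 - p.2)) (by fun_prop)
  have hμD : 0 < μ.real D := ENNReal.toReal_pos (ZSpan.measure_fundamentalDomain_ne_zero b)
    hDb.measure_lt_top.ne
  have hsum : Summable fun x : L => ∫ v in x +ᵥ D, w v ∂μ := by
    rw [← hD.sum_restrict] at hw
    exact (hasSum_integral_measure hw).summable
  refine (hsum.mul_left (|C| / μ.real D)).of_nonneg_of_le (fun _ => norm_nonneg _) fun x => ?_
  have hint : 0 ≤ ∫ y in x +ᵥ D, w y ∂μ := integral_nonneg fun y => (norm_nonneg _).trans (hgw y)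
  have hle (v : V) (hv : v ∈ K) (y : V) (hy : y ∈ x +ᵥ D) : ‖g (v + x)‖ ≤ |C| * w y := by
    obtain ⟨y, hy, rfl⟩ := hy
    have hCy : m (y - v) ≤ |C| := (le_abs_self _).trans
      ((hC (y, v) ⟨subset_closure hy, hv⟩).trans (le_abs_self C))
    have hxy : y - v + (v + x) = x +ᵥ y := by
      rw [Submodule.vadd_def, vadd_eq_add]
      abel
    calc ‖g (v + x)‖ ≤ m (y - v) * w (y - v + (v + x)) := (hgw _).trans (hwm _ _)
      _ ≤ |C| * w (x +ᵥ y) := by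
        rw [hxy]
        exact mul_le_mul_of_nonneg_right hCy ((norm_nonneg _).trans (hgw _))
  refine (ContinuousMap.norm_le _ (by positivity)).2 fun v => ?_
  rw [div_mul_eq_mul_div, le_div_iff₀ hμD, ← integral_const_mul]
  have := setIntegral_ge_of_const_le_real (hDm.const_vadd x) (by
    rw [measure_vadd]
    exact hDb.measure_lt_top.ne) (hle v v.2) (hw.const_mul _).integrableOn
  rwa [measureReal_def, measure_vadd] at this

lemma one_add_norm_rpow_neg_le {E : Type*} [SeminormedAddCommGroup E] {r : ℝ} (hr : 0 ≤ r)
    (v x : E) : (1 + ‖x‖) ^ (-r) ≤ (1 + ‖v‖) ^ r * (1 + ‖v + x‖) ^ (-r) := by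
  have hvx : 1 + ‖v + x‖ ≤ (1 + ‖v‖) * (1 + ‖x‖) := by
    nlinarith [norm_add_le v x, norm_nonneg v, norm_nonneg x]
  rw [Real.rpow_neg (by positivity), Real.rpow_neg (by positivity), ← div_eq_mul_inv,
    le_div_iff₀ (by positivity), inv_mul_le_iff₀ (by positivity),
    ← Real.mul_rpow (by positivity) (by positivity), mul_comm]
  exact Real.rpow_le_rpow (by positivity) (by linarith) hr

lemma exists_norm_le_mul_one_add_norm_rpow_neg {E F : Type*} [NormedAddCommGroup E] [ProperSpace E]
    [NormedAddCommGroup F] {f : E → F} (hf : Continuous f) {r : ℝ} (hr : 0 ≤ r)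
    (hfr : f =O[cocompact E] fun x => ‖x‖ ^ (-r)) : ∃ C, ∀ x, ‖f x‖ ≤ C * (1 + ‖x‖) ^ (-r) := by
  obtain ⟨C, hC0, hC⟩ := hfr.exists_nonneg
  have hlarge : ∀ᶠ x in cocompact E, ‖f x‖ ≤ C * 2 ^ r * (1 + ‖x‖) ^ (-r) := by
    filter_upwards [hC.bound, tendsto_norm_cocompact_atTop.eventually_ge_atTop 1] with x hx hx1
    have hx2 : ‖x‖ ^ (-r) ≤ ((1 + ‖x‖) / 2) ^ (-r) :=
      Real.rpow_le_rpow_of_nonpos (by positivity) (by linarith) (by linarith)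
    rw [Real.norm_of_nonneg (by positivity)] at hx
    refine (hx.trans (mul_le_mul_of_nonneg_left hx2 hC0)).trans_eq ?_
    rw [Real.div_rpow (by positivity) zero_le_two, Real.rpow_neg zero_le_two]
    field_simp
  obtain ⟨K, hK, hKC⟩ := mem_cocompact.1 hlarge
  obtain ⟨C', hC'⟩ := hK.exists_bound_of_continuousOn
    (f := fun x => (1 + ‖x‖) ^ r * ‖f x‖) (by fun_prop (disch := intros; positivity))
  refine ⟨max (C * 2 ^ r) C', fun x => ?_⟩
  by_cases hx : x ∈ K
  · rw [Real.rpow_neg (by positivity), ← div_eq_mul_inv, le_div_iff₀ (by positivity), mul_comm]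
    exact (le_abs_self _).trans ((hC' x hx).trans (le_max_right _ _))
  · refine (hKC hx).trans ?_
    gcongr
    exact le_max_left _ _

lemma integrable_of_isBigO_cocompact_rpow_neg {E F : Type*} [NormedAddCommGroup E]
    [NormedSpace ℝ E] [FiniteDimensional ℝ E] [MeasurableSpace E] [BorelSpace E] {μ : Measure E}
    [μ.IsAddHaarMeasure] [NormedAddCommGroup F] {f : E → F} (hf : Continuous f) {r : ℝ}
    (hr : finrank ℝ E < r) (hfr : f =O[cocompact E] fun x => ‖x‖ ^ (-r)) : Integrable f μ := by
  obtain ⟨C, hC⟩ := exists_norm_le_mul_one_add_norm_rpow_neg hf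
    ((Nat.cast_nonneg _).trans hr.le) hfr
  exact ((integrable_one_add_norm hr).const_mul C).mono' hf.aestronglyMeasurable (.of_forall hC)

theorem summableTranslates_comp_fst_mul_comp_snd {E F : Type*} [NormedAddCommGroup E]
    [NormedSpace ℝ E] [FiniteDimensional ℝ E] [NormedAddCommGroup F] [NormedSpace ℝ F]
    [FiniteDimensional ℝ F] {L : Submodule ℤ (E × F)} [DiscreteTopology L] [IsZLattice ℝ L]
    {R : Type*} [NormedRing R] {r s : ℝ} {ψ : C(E, R)} (hs : finrank ℝ E < s)
    (hψ : ψ =O[cocompact E] fun x => ‖x‖ ^ (-s)) {f : C(F, R)} (hr : finrank ℝ F < r)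
    (hf : f =O[cocompact F] fun x => ‖x‖ ^ (-r)) :
    SummableTranslates L (ψ.comp .fst * f.comp .snd) := by
  borelize E F
  have hs0 : 0 ≤ s := (Nat.cast_nonneg _).trans hs.le
  have hr0 : 0 ≤ r := (Nat.cast_nonneg _).trans hr.le
  obtain ⟨C, hC⟩ := exists_norm_le_mul_one_add_norm_rpow_neg ψ.continuous hs0 hψ
  obtain ⟨C', hC'⟩ := exists_norm_le_mul_one_add_norm_rpow_neg f.continuous hr0 hf
  refine SummableTranslates.of_norm_le_moderate (μ := Measure.addHaar.prod Measure.addHaar)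
    (w := fun v => C * (1 + ‖v.1‖) ^ (-s) * (C' * (1 + ‖v.2‖) ^ (-r)))
    (m := fun v => (1 + ‖v.1‖) ^ s * (1 + ‖v.2‖) ^ r) (fun v => ?_)
    (((integrable_one_add_norm hs).const_mul C).mul_prod
      ((integrable_one_add_norm hr).const_mul C'))
    (by fun_prop (disch := intros; positivity)) fun v x => ?_
  · exact (norm_mul_le _ _).trans
      (mul_le_mul (hC v.1) (hC' v.2) (norm_nonneg _) ((norm_nonneg _).trans (hC v.1)))
  · have hC0 : 0 ≤ C := by simpa using (norm_nonneg _).trans (hC 0)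
    have hC'0 : 0 ≤ C' := by simpa using (norm_nonneg _).trans (hC' 0)
    calc C * (1 + ‖x.1‖) ^ (-s) * (C' * (1 + ‖x.2‖) ^ (-r))
      _ ≤ C * ((1 + ‖v.1‖) ^ s * (1 + ‖v.1 + x.1‖) ^ (-s)) *
          (C' * ((1 + ‖v.2‖) ^ r * (1 + ‖v.2 + x.2‖) ^ (-r))) := by
        gcongr
        · exact one_add_norm_rpow_neg_le hs0 _ _
        · exact one_add_norm_rpow_neg_le hr0 _ _
      _ = _ := by simp only [Prod.fst_add, Prod.snd_add]; ring

end Decay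

section LaplaceKernel

open Filter Asymptotics Real

lemma hasTemperateGrowth_finsetProd {ι E : Type*} [NormedAddCommGroup E] [NormedSpace ℝ E]
    {p : ι → E → ℂ} (hp : ∀ i, (p i).HasTemperateGrowth) (s : Finset ι) :
    Function.HasTemperateGrowth fun k => ∏ i ∈ s, p i k := by
  classical
  induction s using Finset.induction_on with
  | empty => simp
  | insert i s hi ih =>
    simp only [Finset.prod_insert hi]
    exact (hp i).mul ih

lemma fourier_exp_neg_abs (k : ℝ) :
    𝓕 (fun x : ℝ => (Real.exp (-|x|) : ℂ)) k = 2 / (1 + (2 * π * k) ^ 2) := by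
  set a : ℂ := 2 * π * k * Complex.I with ha
  have hre : a.re = 0 := by simp [ha]
  have hexp (x y : ℝ) : Complex.exp (((-2 * π * ⟪x, k⟫ : ℝ) : ℂ) * Complex.I) • (Real.exp y : ℂ) =
      Complex.exp (y - a * x) := by
    rw [Complex.ofReal_exp, smul_eq_mul, ← Complex.exp_add, ha]
    simp only [RCLike.inner_apply, conj_trivial]
    push_cast
    ring_nf
  have hneg {x : ℝ} (hx : x ∈ Set.Iic 0) :
      Complex.exp (((-2 * π * ⟪x, k⟫ : ℝ) : ℂ) * Complex.I) • (Real.exp (-|x|) : ℂ) =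
        Complex.exp ((1 - a) * x) := by
    rw [hexp, abs_of_nonpos hx, neg_neg, sub_mul, one_mul]
  have hpos {x : ℝ} (hx : x ∈ Set.Ioi 0) :
      Complex.exp (((-2 * π * ⟪x, k⟫ : ℝ) : ℂ) * Complex.I) • (Real.exp (-|x|) : ℂ) =
        Complex.exp (-(1 + a) * x) := by
    rw [hexp, abs_of_pos hx, Complex.ofReal_neg, neg_mul, add_mul, one_mul, neg_add']
  have hre1 : 0 < (1 - a).re := by simp [hre]
  have hre2 : (-(1 + a)).re < 0 := by simp [hre]
  have h1 : 1 - a ≠ 0 := fun h => by simp [h] at hre1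
  have h2 : 1 + a ≠ 0 := fun h => by simp [h] at hre2
  rw [fourier_eq', ← intervalIntegral.integral_Iic_add_Ioi
      ((integrableOn_exp_mul_complex_Iic hre1 0).congr_fun (fun _ hx => (hneg hx).symm)
        measurableSet_Iic)
      ((integrableOn_exp_mul_complex_Ioi hre2 0).congr_fun (fun _ hx => (hpos hx).symm)
        measurableSet_Ioi),
    setIntegral_congr_fun measurableSet_Iic fun _ hx => hneg hx,
    setIntegral_congr_fun measurableSet_Ioi fun _ hx => hpos hx,
    integral_exp_mul_complex_Iic hre1, integral_exp_mul_complex_Ioi hre2]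
  have hden : 1 + (2 * π * k : ℂ) ^ 2 = (1 - a) * (1 + a) := by
    rw [ha]; ring_nf; rw [Complex.I_sq]; ring
  rw [hden]
  simp only [Complex.ofReal_zero, mul_zero, Complex.exp_zero]
  field_simp
  ring

variable {ι E : Type*} [Fintype ι] [NormedAddCommGroup E] [InnerProductSpace ℝ E]
  (b : OrthonormalBasis ι ℝ E)

section Fourier

variable [FiniteDimensional ℝ E] [MeasurableSpace E] [BorelSpace E]

lemma integral_prod_inner (g : ι → ℝ → ℂ) :
    ∫ x : E, ∏ i, g i ⟪b i, x⟫ = ∏ i, ∫ t, g i t := by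
  rw [← b.measurePreserving_repr_symm.integral_comp b.repr.symm.toHomeomorph.measurableEmbedding,
    ← (PiLp.volume_preserving_toLp ι).integral_comp
      (MeasurableEquiv.toLp 2 (ι → ℝ)).measurableEmbedding]
  simp [← OrthonormalBasis.repr_apply_apply, integral_fintype_prod_volume_eq_prod]

lemma fourier_prod_inner (g : ι → ℝ → ℂ) (k : E) :
    𝓕 (fun x : E => ∏ i, g i ⟪b i, x⟫) k = ∏ i, 𝓕 (g i) ⟪b i, k⟫ := by
  simp only [fourier_eq']
  rw [← integral_prod_inner b fun i t =>
    Complex.exp (((-2 * π * ⟪t, ⟪b i, k⟫⟫ : ℝ) : ℂ) * Complex.I) • g i t]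
  congr! 2 with x
  simp only [smul_eq_mul, Finset.prod_mul_distrib, ← Complex.exp_sum, ← Finset.sum_mul]
  rw [← b.sum_inner_mul_inner x k]
  congr 2
  push_cast
  rw [Finset.mul_sum]
  refine congrArg (· * Complex.I) (Finset.sum_congr rfl fun i _ => ?_)
  simp only [RCLike.inner_apply, conj_trivial, real_inner_comm x]
  push_cast
  ring

end Fourier

/-- A product of one-dimensional Laplace kernels `x ↦ exp (-|x|)` in the coordinates of `b`: its
Fourier transform is the inverse of a polynomial, hence divides every Schwartz function. -/
noncomputable def laplaceKernel (x : E) : ℂ :=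
  ∏ i, (Real.exp (-|⟪b i, x⟫|) : ℂ)

lemma continuous_laplaceKernel : Continuous (laplaceKernel b) := by
  unfold laplaceKernel
  fun_prop

lemma fourier_laplaceKernel [FiniteDimensional ℝ E] [MeasurableSpace E] [BorelSpace E] (k : E) :
    𝓕 (laplaceKernel b) k = ∏ i, (2 / (1 + (2 * π * ⟪b i, k⟫) ^ 2) : ℂ) :=
  (fourier_prod_inner b _ k).trans (Finset.prod_congr rfl fun _ _ => fourier_exp_neg_abs _)

lemma norm_laplaceKernel_le (x : E) : ‖laplaceKernel b x‖ ≤ Real.exp (-‖x‖) := by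
  have hx : ‖x‖ ≤ ∑ i, |⟪b i, x⟫| := by
    conv_lhs => rw [← b.sum_repr' x]
    exact (norm_sum_le _ _).trans_eq (by simp [norm_smul])
  have hψ : laplaceKernel b x = Real.exp (-∑ i, |⟪b i, x⟫|) := by
    rw [← Finset.sum_neg_distrib, Real.exp_sum, Complex.ofReal_prod]
    rfl
  rw [hψ, Complex.norm_real, Real.norm_of_nonneg (Real.exp_pos _).le]
  gcongr

lemma laplaceKernel_isBigO_cocompact_rpow [ProperSpace E] (r : ℝ) :
    laplaceKernel b =O[cocompact E] fun x => ‖x‖ ^ r :=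
  (IsBigO.of_bound 1 (.of_forall fun x => by
    simpa using norm_laplaceKernel_le b x)).trans
    ((isLittleO_exp_neg_mul_rpow_atTop one_pos r).isBigO.comp_tendsto
      (tendsto_norm_cocompact_atTop (E := E)))

lemma hasTemperateGrowth_prod_one_add_inner_sq : Function.HasTemperateGrowth
    fun k : E => ∏ i, ((1 + (2 * π * ⟪b i, k⟫) ^ 2) / 2 : ℂ) := by
  refine hasTemperateGrowth_finsetProd (fun i => ?_) Finset.univ
  have : Function.HasTemperateGrowth fun k : E => ((⟪b i, k⟫ : ℝ) : ℂ) :=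
    Function.Complex.hasTemperateGrowth_ofReal.comp (Function.hasTemperateGrowth_inner_right (b i))
  simp only [div_eq_mul_inv]
  fun_prop

lemma exists_fourier_laplaceKernel_mul [FiniteDimensional ℝ E] [MeasurableSpace E] [BorelSpace E]
    (φ : SchwartzMap E ℂ) : ∃ h : SchwartzMap E ℂ, ∀ k, 𝓕 (laplaceKernel b) k * h k = φ k := by
  refine ⟨SchwartzMap.smulLeftCLM ℂ (fun k => ∏ i, ((1 + (2 * π * ⟪b i, k⟫) ^ 2) / 2 : ℂ)) φ,
    fun k => ?_⟩
  have hne (i : ι) : (1 + (2 * π * ⟪b i, k⟫) ^ 2 : ℂ) ≠ 0 := by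
    norm_cast; positivity
  rw [SchwartzMap.smulLeftCLM_apply_apply (hasTemperateGrowth_prod_one_add_inner_sq b),
    fourier_laplaceKernel, smul_eq_mul, ← mul_assoc, ← Finset.prod_mul_distrib,
    Finset.prod_eq_one fun i _ => ?_, one_mul]
  rw [← inv_div, inv_mul_cancel₀ (div_ne_zero (hne i) two_ne_zero)]

end LaplaceKernel

section ProductLattice

open Asymptotics Filter

variable {E F : Type*} [NormedAddCommGroup E] [InnerProductSpace ℝ E] [NormedAddCommGroup F]
  [InnerProductSpace ℝ F]

variable (E F) in
/-- The Euclidean pairing on `E × F`, as a bilinear form because the norm of the type `E × F` is the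
supremum norm. -/
noncomputable def euclideanPairing : LinearMap.BilinForm ℝ (E × F) :=
  (innerₗ E).compl₁₂ (.fst ℝ E F) (.fst ℝ E F) + (innerₗ F).compl₁₂ (.snd ℝ E F) (.snd ℝ E F)

@[simp]
lemma euclideanPairing_apply (y x : E × F) :
    euclideanPairing E F y x = ⟪y.1, x.1⟫ + ⟪y.2, x.2⟫ := rfl

lemma nondegenerate_euclideanPairing : (euclideanPairing E F).Nondegenerate := by
  have hself {v : E × F} (hv : ⟪v.1, v.1⟫ + ⟪v.2, v.2⟫ = 0) : v = 0 := by
    obtain ⟨h₁, h₂⟩ := (add_eq_zero_iff_of_nonneg real_inner_self_nonneg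
      real_inner_self_nonneg).1 hv
    exact Prod.ext (inner_self_eq_zero.1 h₁) (inner_self_eq_zero.1 h₂)
  exact ⟨fun v hv => hself (hv v), fun v hv => hself (hv v)⟩

variable [FiniteDimensional ℝ E] [MeasurableSpace E] [BorelSpace E]

lemma fourierInv_star (f : E → ℂ) (k : E) : 𝓕⁻ (star f) k = conj (𝓕 f k) := by
  rw [Real.fourierInv_eq', Real.fourier_eq', ← integral_conj]
  simp [← Complex.exp_conj, Complex.conj_ofNat]

lemma integral_comp_sub_mul_fourier {ψ h : E → ℂ} (hψ : Integrable ψ) (hh : Integrable h) (z : E) :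
    ∫ x, ψ (x - z) * 𝓕 h x = 𝓕 (fun k => 𝓕 ψ k * h k) z := by
  have hshift (k : E) : 𝓕 (fun x => ψ (x - z)) k = 𝐞 (-⟪k, z⟫) • 𝓕 ψ k := by
    simp only [sub_eq_add_neg]
    rw [← real_inner_comm k z, ← inner_neg_left]
    exact congrFun (VectorFourier.fourierIntegral_comp_add_right 𝐞 volume (innerₗ E) ψ (-z)) k
  have hflip : ∫ k, 𝓕 (fun x => ψ (x - z)) k • h k = ∫ x, ψ (x - z) • 𝓕 h x := by
    simpa using! VectorFourier.integral_fourierIntegral_smul_eq_flip (L := innerₗ E)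
      Real.continuous_fourierChar continuous_inner (hψ.comp_sub_right z) hh
  simp only [smul_eq_mul, hshift] at hflip
  rw [← hflip, Real.fourier_eq]
  simp only [smul_mul_assoc]

variable [FiniteDimensional ℝ F] [MeasurableSpace F] [BorelSpace F]

lemma integral_fourierChar_euclideanPairing_smul_mul (g : E → ℂ) (f : F → ℂ) (q : E × F) :
    ∫ v : E × F, 𝐞 (-euclideanPairing E F q v) • (g v.1 * f v.2) = 𝓕 g q.1 * 𝓕 f q.2 := by
  rw [Real.fourier_eq, Real.fourier_eq, ← integral_prod_mul, Measure.volume_eq_prod]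
  congr! 2
  simp only [euclideanPairing_apply, neg_add, AddChar.map_add_eq_mul, Circle.smul_def,
    Circle.coe_mul, smul_eq_mul, real_inner_comm q.1, real_inner_comm q.2]
  ring

variable {L : Submodule ℤ (E × F)} [DiscreteTopology L] [IsZLattice ℝ L] {f : F → ℂ} {r : ℝ}

lemma exists_hasSum_lattice_integral_hasSum_dualLattice {ψ g : C(E, ℂ)} {s : ℝ}
    (hs : finrank ℝ E < s) (hψ : ψ =O[cocompact E] fun x => ‖x‖ ^ (-s))
    (hg : g =O[cocompact E] fun x => ‖x‖ ^ (-s)) (hf : Continuous f) (hr : finrank ℝ F < r)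
    (hfr : f =O[cocompact F] fun u => ‖u‖ ^ (-r)) :
    ∃ S, HasSum (fun p : L => ((ZLattice.covolume L)⁻¹ • ∫ u, f u * conj (f (u - p.1.2))) *
        ∫ x, ψ (x - p.1.1) * g x) S ∧
      HasSum (fun q : (euclideanPairing E F).dualSubmodule L =>
        ((ZLattice.covolume L)⁻¹ ^ 2 * ‖𝓕⁻ f q.1.2‖ ^ 2) •
          (𝓕 (ψ : E → ℂ) q.1.1 * 𝓕⁻ (g : E → ℂ) q.1.1)) S := by
  have : (volume : Measure (E × F)).IsAddHaarMeasure := Measure.prod.instIsAddHaarMeasure _ _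
  obtain ⟨S, hdirect, hdual⟩ := exists_hasSum_lattice_hasSum_dualLattice (L := L) volume
    nondegenerate_euclideanPairing
    (summableTranslates_comp_fst_mul_comp_snd (ψ := star ψ) hs
      (.of_norm_left <| by simpa using hψ.norm_left) (f := ⟨f, hf⟩) hr hfr)
    (summableTranslates_comp_fst_mul_comp_snd hs hg (f := ⟨f, hf⟩) hr hfr)
  refine ⟨S, ((Equiv.neg L).hasSum_iff.2 hdirect).congr_fun fun p => ?_,
    ((Equiv.neg _).hasSum_iff.2 hdual).congr_fun fun q => ?_⟩
  · rw [Function.comp_apply, smul_mul_assoc, Measure.volume_eq_prod, mul_comm, ← integral_prod_mul]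
    refine congrArg _ (integral_congr_ae (.of_forall fun v => ?_))
    simp [sub_eq_add_neg]
    ring
  · have hcoeff (g : E → ℂ) : ∫ v : E × F, 𝐞 (-euclideanPairing E F (-q.1) v) • (g v.1 * f v.2) =
        𝓕⁻ g q.1.1 * 𝓕⁻ f q.1.2 := by
      rw [integral_fourierChar_euclideanPairing_smul_mul, Real.fourierInv_eq_fourier_neg,
        Real.fourierInv_eq_fourier_neg, Prod.fst_neg, Prod.snd_neg]
    refine Eq.trans ?_ (congrArg₂ (fun a b => _ • (conj a * b)) (hcoeff (star ψ)) (hcoeff g)).symm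
    rw [fourierInv_star, map_mul, Complex.conj_conj, mul_mul_mul_comm, Complex.conj_mul', mul_smul]
    rw [Complex.real_smul (x := ‖_‖ ^ 2), Complex.ofReal_pow, mul_comm (_ * _)]

theorem exists_hasSum_lattice_fourier_hasSum_dualLattice (hf : Continuous f)
    (hr : finrank ℝ F < r) (hfr : f =O[cocompact F] fun u => ‖u‖ ^ (-r)) (φ : SchwartzMap E ℂ) :
    ∃ S, HasSum (fun p : L => ((ZLattice.covolume L)⁻¹ • ∫ u, f u * conj (f (u - p.1.2))) *
        𝓕 (φ : E → ℂ) p.1.1) S ∧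
      HasSum (fun q : (euclideanPairing E F).dualSubmodule L =>
        ((ZLattice.covolume L)⁻¹ ^ 2 * ‖𝓕⁻ f q.1.2‖ ^ 2) • φ q.1.1) S := by
  let b := stdOrthonormalBasis ℝ E
  obtain ⟨h, hφ⟩ := exists_fourier_laplaceKernel_mul b φ
  have hs : (finrank ℝ E : ℝ) < finrank ℝ E + 1 := lt_add_one _
  have hψ := laplaceKernel_isBigO_cocompact_rpow b (-(finrank ℝ E + 1))
  have hψi : Integrable (laplaceKernel b) :=
    integrable_of_isBigO_cocompact_rpow_neg (continuous_laplaceKernel b) hs hψ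
  have hinv (k : E) : 𝓕⁻ (𝓕 (h : E → ℂ)) k = h k := by
    rw [← SchwartzMap.fourier_coe, ← SchwartzMap.fourierInv_coe,
      FourierTransform.fourierInv_fourier_eq]
  have hsum := exists_hasSum_lattice_integral_hasSum_dualLattice (L := L)
    (ψ := ⟨laplaceKernel b, continuous_laplaceKernel b⟩)
    (g := ⟨(𝓕 h : SchwartzMap E ℂ), (𝓕 h : SchwartzMap E ℂ).continuous⟩)
    hs hψ ((𝓕 h : SchwartzMap E ℂ).isBigO_cocompact_rpow _) hf hr hfr
  simpa only [ContinuousMap.coe_mk, SchwartzMap.fourier_coe, hinv, hφ,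
    integral_comp_sub_mul_fourier hψi h.integrable] using hsum

theorem generalized_poisson_summation_general {star starD : E → F}
    (hstar : ∀ p ∈ L, star p.1 = p.2)
    (hstarD : ∀ q ∈ (euclideanPairing E F).dualSubmodule L, starD q.1 = q.2) (hf : Continuous f)
    (hr : finrank ℝ F < r) (hfr : f =O[cocompact F] fun u => ‖u‖ ^ (-r)) (φ : SchwartzMap E ℂ) :
    ∃ S, HasSum (fun z : Prod.fst '' (L : Set (E × F)) =>
        ((ZLattice.covolume L)⁻¹ • ∫ u, f u * conj (f (u - star z))) * 𝓕 (φ : E → ℂ) z) S ∧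
      HasSum (fun k : Prod.fst '' ((euclideanPairing E F).dualSubmodule L : Set (E × F)) =>
        ((ZLattice.covolume L)⁻¹ ^ 2 * ‖𝓕⁻ f (starD k)‖ ^ 2) • φ k) S := by
  obtain ⟨S, hdirect, hdual⟩ :=
    exists_hasSum_lattice_fourier_hasSum_dualLattice (L := L) hf hr hfr φ
  have hinj {N : Submodule ℤ (E × F)} {σ : E → F} (hσ : ∀ p ∈ N, σ p.1 = p.2) :
      Set.InjOn Prod.fst (N : Set (E × F)) := fun p hp q hq hpq =>
    Prod.ext hpq (by rw [← hσ p hp, ← hσ q hq, hpq])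
  refine ⟨S, (Equiv.Set.imageOfInjOn Prod.fst _ (hinj hstar)).hasSum_iff.1
      (hdirect.congr_fun fun p => ?_),
    (Equiv.Set.imageOfInjOn Prod.fst _ (hinj hstarD)).hasSum_iff.1
      (hdual.congr_fun fun q => ?_)⟩
  · simp [Equiv.Set.imageOfInjOn, hstar _ p.2]
  · simp [Equiv.Set.imageOfInjOn, hstarD _ q.2]

end ProductLattice

lemma coe_dualSubmodule_euclideanPairing (d m : ℕ)
    (L : Submodule ℤ (EuclideanSpace ℝ (Fin d) × EuclideanSpace ℝ (Fin m))) :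
    ((euclideanPairing _ _).dualSubmodule L : Set _) = dualL d m L := by
  ext y
  simp [dualL, LinearMap.BilinForm.mem_dualSubmodule, Submodule.mem_one, eq_comm]

lemma integral_exp_neg_mul_eq_fourier {E : Type*} [NormedAddCommGroup E] [InnerProductSpace ℝ E]
    [MeasurableSpace E] [BorelSpace E] [FiniteDimensional ℝ E] (f : E → ℂ) (k : E) :
    ∫ x, Complex.exp (-(2 * Real.pi * Complex.I * ((⟪x, k⟫ : ℝ) : ℂ))) * f x = 𝓕 f k := by
  rw [Real.fourier_eq']
  congr! 3 with x
  push_cast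
  ring_nf

lemma integral_exp_mul_eq_fourierInv {E : Type*} [NormedAddCommGroup E] [InnerProductSpace ℝ E]
    [MeasurableSpace E] [BorelSpace E] [FiniteDimensional ℝ E] (f : E → ℂ) (k : E) :
    ∫ x, Complex.exp (2 * Real.pi * Complex.I * ((⟪k, x⟫ : ℝ) : ℂ)) * f x = 𝓕⁻ f k := by
  rw [Real.fourierInv_eq']
  congr! 3 with x
  push_cast
  rw [real_inner_comm]
  ring_nf

lemma isBigO_cocompact_rpow_neg_of_rpow_mul_norm_le {E F : Type*} [NormedAddCommGroup E]
    [NormedAddCommGroup F] {f : E → F} {C r : ℝ}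
    (hf : ∀ x, ‖x‖ ^ r * ‖f x‖ ≤ C) : f =O[Filter.cocompact E] fun x => ‖x‖ ^ (-r) := by
  refine .of_bound C ?_
  filter_upwards [(isCompact_singleton (x := 0)).compl_mem_cocompact] with x hx
  have hx : 0 < ‖x‖ ^ r := Real.rpow_pos_of_pos (norm_pos_iff.2 hx) r
  rw [Real.rpow_neg (norm_nonneg x), Real.norm_of_nonneg (inv_nonneg.2 hx.le), ← div_eq_mul_inv,
    le_div_iff₀' hx]
  exact hf x

/-- Generalized Poisson summation formula on a dense ℤ-module:
(∑_{z∈L} η(z) δ_z)^ = ∑_{k∈L*} |c(k)|² δ_k in the tempered-distribution sense, i.e.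
tested against any Schwartz function φ (γ̂(φ) = γ(φ̂)). Here
η(z) = (1/|det L̃|) ∫ f(u) conj(f(u−z*)) du and |c(k)|² = (1/|det L̃|²)|f̂(−k*)|². -/
theorem generalized_poisson_summation (d m : ℕ)
    (L : Submodule ℤ (EuclideanSpace ℝ (Fin d) × EuclideanSpace ℝ (Fin m)))
    [DiscreteTopology L] [IsZLattice ℝ L]
    (hinj1 : Set.InjOn Prod.fst (L : Set (EuclideanSpace ℝ (Fin d) × EuclideanSpace ℝ (Fin m))))
    (hdense1 : Dense (physL d m L))
    (hinj2 : Set.InjOn Prod.snd (L : Set (EuclideanSpace ℝ (Fin d) × EuclideanSpace ℝ (Fin m))))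
    (hdense2 : Dense (Prod.snd '' (L : Set (EuclideanSpace ℝ (Fin d) × EuclideanSpace ℝ (Fin m)))))
    (star : EuclideanSpace ℝ (Fin d) → EuclideanSpace ℝ (Fin m))
    (hstar : ∀ p ∈ L, star (Prod.fst p) = Prod.snd p)
    (starD : EuclideanSpace ℝ (Fin d) → EuclideanSpace ℝ (Fin m))
    (hinjD : Set.InjOn Prod.fst (dualL d m L))
    (hstarD : ∀ p ∈ dualL d m L, starD (Prod.fst p) = Prod.snd p)
    (f : EuclideanSpace ℝ (Fin m) → ℂ) (hf : Continuous f)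
    (C α : ℝ) (hC : 0 < C) (hα : 0 < α)
    (hdecay : ∀ x : EuclideanSpace ℝ (Fin m), ‖x‖ ^ ((m : ℝ) + 1 + α) * ‖f x‖ ≤ C) :
    ∀ φ : SchwartzMap (EuclideanSpace ℝ (Fin d)) ℂ,
      (∑' z : physL d m L, etaLim d m L star f (z : EuclideanSpace ℝ (Fin d)) *
          ∫ x, Complex.exp (-(2 * Real.pi * Complex.I *
            ((⟪x, (z : EuclideanSpace ℝ (Fin d))⟫ : ℝ) : ℂ))) * φ x)
        = ∑' k : Prod.fst '' dualL d m L,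
            intensity d m L starD f (k : EuclideanSpace ℝ (Fin d)) •
              φ (k : EuclideanSpace ℝ (Fin d)) := by
  intro φ
  have hr : (finrank ℝ (EuclideanSpace ℝ (Fin m)) : ℝ) < m + 1 + α := by
    rw [finrank_euclideanSpace_fin]
    linarith
  rw [← coe_dualSubmodule_euclideanPairing] at hstarD ⊢
  obtain ⟨S, hdirect, hdual⟩ := generalized_poisson_summation_general hstar hstarD hf hr
    (isBigO_cocompact_rpow_neg_of_rpow_mul_norm_le hdecay) φ
  simp only [etaLim, intensity, integral_exp_neg_mul_eq_fourier, integral_exp_mul_eq_fourierInv]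
  exact hdirect.tsum_eq.trans hdual.tsum_eq.symm
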